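/- arXiv:1209.1721 — 3 statements merged into one kernel-verified Lean document; each statement's English description precedes it below -/
import Mathlib

section
/- Let S be a semiring, A a strictly upper triangular n×n matrix over S (A i j = 0 whenever j ≤ i), and B an n×s matrix over S. Then the matrix Bellman equation X = A·X + B has the unique solution X = (I + A + A² + ⋯ + A^{n−1})·B; that is, any matrix X with X = A·X + B equals (∑_{k=0}^{n-1} A^k)·B. -/
/-!
Substituting `X = A * X + B` into itself `m` times gives `X = A ^ m * X + (∑ k < m, A ^ k) * B`.
An entry of `A ^ m` is a sum over chains of indices `i₀ < i₁ < ⋯ < iₘ`, and there is no such chain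
once `m` reaches the number of indices, so the unknown `X` disappears from the right-hand side.
-/

/-- Strictly upper triangular matrices: all entries off the region `i < j` vanish. The condition is
`¬ i < j` rather than `j ≤ i`, so that over a partially ordered index type the entries at
incomparable indices vanish too. -/
def IsStrictlyUpperTriangular {ι S : Type*} [LT ι] [Zero S] (A : Matrix ι ι S) : Prop :=
  ∀ ⦃i j⦄, ¬ i < j → A i j = 0

section Nilpotency

variable {ι S : Type*} [Fintype ι] [DecidableEq ι] [Preorder ι] [Semiring S] {A : Matrix ι ι S}

theorem IsStrictlyUpperTriangular.pow_apply_eq_zero_of_ncard_Ioi_lt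
    (hA : IsStrictlyUpperTriangular A) {k : ℕ} {i : ι} (hik : (Set.Ioi i).ncard < k) (j : ι) :
    (A ^ k) i j = 0 := by
  induction k generalizing i with
  | zero => exact absurd hik (Nat.not_lt_zero _)
  | succ k ih =>
    rw [pow_succ', Matrix.mul_apply]
    refine Finset.sum_eq_zero fun l _ => ?_
    by_cases hil : i < l
    · have card_lt : (Set.Ioi l).ncard < (Set.Ioi i).ncard :=
        Set.ncard_lt_ncard (Set.Ioi_ssubset_Ioi hil)
      rw [ih (card_lt.trans_le (Nat.lt_succ_iff.mp hik)), mul_zero]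
    · rw [hA hil, zero_mul]

theorem IsStrictlyUpperTriangular.pow_card_eq_zero (hA : IsStrictlyUpperTriangular A) :
    A ^ Fintype.card ι = 0 := by
  ext i j
  have card_lt : (Set.Ioi i).ncard < Fintype.card ι := by
    rw [← Nat.card_eq_fintype_card]
    exact Set.ncard_lt_card ((Set.ne_univ_iff_exists_notMem _).mpr ⟨i, Set.self_notMem_Ioi⟩)
  exact hA.pow_apply_eq_zero_of_ncard_Ioi_lt card_lt j

end Nilpotency

theorem geom_sum_eq_mul_geom_sum_add_one_of_pow_eq_zero {R : Type*} [Semiring R] {a : R} {m : ℕ}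
    (ha : a ^ m = 0) :
    ∑ k ∈ Finset.range m, a ^ k = a * ∑ k ∈ Finset.range m, a ^ k + 1 := by
  rw [← geom_sum_succ, geom_sum_succ', ha, zero_add]

section BellmanEquation

variable {ι κ S : Type*} [Fintype ι] [DecidableEq ι] [Semiring S] {A : Matrix ι ι S}
  {B X : Matrix ι κ S}

theorem eq_pow_mul_add_geom_sum_mul_of_eq_mul_add (hX : X = A * X + B) (m : ℕ) :
    X = A ^ m * X + (∑ k ∈ Finset.range m, A ^ k) * B := by
  induction m with
  | zero => simp
  | succ m ih =>
    calc
      X = A ^ m * X + (∑ k ∈ Finset.range m, A ^ k) * B := ih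
      _ = A ^ m * (A * X + B) + (∑ k ∈ Finset.range m, A ^ k) * B := by rw [← hX]
      _ = A ^ (m + 1) * X + (∑ k ∈ Finset.range (m + 1), A ^ k) * B := by
        rw [geom_sum_succ', Matrix.mul_add, Matrix.add_mul, pow_succ, Matrix.mul_assoc, add_assoc]

theorem eq_mul_add_iff_eq_geom_sum_mul_of_pow_eq_zero {m : ℕ} (hA : A ^ m = 0) :
    X = A * X + B ↔ X = (∑ k ∈ Finset.range m, A ^ k) * B := by
  constructor
  · intro hX
    simpa only [hA, Matrix.zero_mul, zero_add] using
      eq_pow_mul_add_geom_sum_mul_of_eq_mul_add hX m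
  · rintro rfl
    calc
      (∑ k ∈ Finset.range m, A ^ k) * B = (A * ∑ k ∈ Finset.range m, A ^ k + 1) * B := by
        rw [← geom_sum_eq_mul_geom_sum_add_one_of_pow_eq_zero hA]
      _ = A * ((∑ k ∈ Finset.range m, A ^ k) * B) + B := by
        rw [Matrix.add_mul, Matrix.one_mul, Matrix.mul_assoc]

end BellmanEquation

theorem bellman_unique_solution_strictly_upper_triangular_general {ι κ S : Type*} [Fintype ι]
    [DecidableEq ι] [Preorder ι] [Semiring S] {A : Matrix ι ι S}
    (hA : IsStrictlyUpperTriangular A) (B X : Matrix ι κ S) :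
    X = A * X + B ↔ X = (∑ k ∈ Finset.range (Fintype.card ι), A ^ k) * B :=
  eq_mul_add_iff_eq_geom_sum_mul_of_pow_eq_zero hA.pow_card_eq_zero

/-- For a strictly upper triangular matrix `A`, the matrix Bellman equation
`X = A * X + B` has the unique solution `X = (I + A + ⋯ + A^(n-1)) * B`. -/
theorem bellman_unique_solution_strictly_upper_triangular {S : Type*} [Semiring S]
    (n s : ℕ) (A : Matrix (Fin n) (Fin n) S) (hA : ∀ i j : Fin n, j ≤ i → A i j = 0)
    (B X : Matrix (Fin n) (Fin s) S) (hX : X = A * X + B) :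
    X = (∑ k ∈ Finset.range n, A ^ k) * B := by
  have hA' : IsStrictlyUpperTriangular A := fun i j hij => hA i j (not_lt.mp hij)
  simpa only [Fintype.card_fin] using
    (bellman_unique_solution_strictly_upper_triangular_general hA' B X).mp hX
end

section
/- Let S be a semiring and consider a block matrix A = [[A₁₁, A₁₂], [A₂₁, A₂₂]] over S, where A₁₁ is k×k, A₁₂ is k×m, A₂₁ is m×k and A₂₂ is m×m. Suppose P is a k×k matrix with P = A₁₁·P + I, and Q is an m×m matrix with Q = D·Q + I, where D := A₂₂ + A₂₁·P·A₁₂. Then the block matrix X = [[P + P·A₁₂·Q·A₂₁·P, P·A₁₂·Q], [Q·A₂₁·P, Q]] satisfies X = A·X + I. -/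
/-!
Block elimination solves `X = A * X + B` for an arbitrary right-hand side `B`, split into rows
`B₁`, `B₂`. Multiplying by the closure `P` of `A₁₁` solves the first row as
`X₁ = P * (A₁₂ * X₂ + B₁)`; substituting this into the second row leaves
`X₂ = D * X₂ + (A₂₁ * P * B₁ + B₂)`, which multiplying by the closure `Q` of `D` solves.
The closure of `A` is the solution for `B = 1`.
-/

section BlockElimination

open Matrix

variable {S k m n : Type*}

theorem fromRows_add_fromRows [Add S] (A₁ B₁ : Matrix k n S) (A₂ B₂ : Matrix m n S) :
    fromRows A₁ A₂ + fromRows B₁ B₂ = fromRows (A₁ + B₁) (A₂ + B₂) := by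
  ext (i | i) j <;> rfl

theorem fromCols_add_fromCols [Add S] (A₁ B₁ : Matrix n k S) (A₂ B₂ : Matrix n m S) :
    fromCols A₁ A₂ + fromCols B₁ B₂ = fromCols (A₁ + B₁) (A₂ + B₂) := by
  ext i (j | j) <;> rfl

variable [Semiring S] [Fintype k] [DecidableEq k]

theorem mul_eq_mul_mul_add_of_eq_mul_add_one {A P : Matrix k k S} (hP : P = A * P + 1)
    (B : Matrix k n S) : P * B = A * (P * B) + B :=
  calc
    P * B = (A * P + 1) * B := congrArg (· * B) hP
    _ = A * (P * B) + B := by rw [Matrix.add_mul, Matrix.one_mul, Matrix.mul_assoc]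

variable [Fintype m] [DecidableEq m]

theorem fromRows_eq_fromBlocks_mul_fromRows_add
    {A₁₁ : Matrix k k S} {A₁₂ : Matrix k m S} {A₂₁ : Matrix m k S} {A₂₂ : Matrix m m S}
    {P : Matrix k k S} {Q : Matrix m m S}
    (hP : P = A₁₁ * P + 1) (hQ : Q = (A₂₂ + A₂₁ * P * A₁₂) * Q + 1)
    {B₁ X₁ : Matrix k n S} {B₂ X₂ : Matrix m n S}
    (hX₁ : X₁ = P * (A₁₂ * X₂ + B₁)) (hX₂ : X₂ = Q * (A₂₁ * (P * B₁) + B₂)) :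
    fromRows X₁ X₂ = fromBlocks A₁₁ A₁₂ A₂₁ A₂₂ * fromRows X₁ X₂ + fromRows B₁ B₂ := by
  have first_row : X₁ = A₁₁ * X₁ + A₁₂ * X₂ + B₁ := by
    have := mul_eq_mul_mul_add_of_eq_mul_add_one hP (A₁₂ * X₂ + B₁)
    rwa [← hX₁, ← add_assoc] at this
  have second_row : X₂ = A₂₁ * X₁ + A₂₂ * X₂ + B₂ :=
    calc
      X₂ = (A₂₂ + A₂₁ * P * A₁₂) * X₂ + (A₂₁ * (P * B₁) + B₂) := by
        have := mul_eq_mul_mul_add_of_eq_mul_add_one hQ (A₂₁ * (P * B₁) + B₂)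
        rwa [← hX₂] at this
      _ = A₂₁ * (P * (A₁₂ * X₂ + B₁)) + A₂₂ * X₂ + B₂ := by
        simp only [Matrix.add_mul, Matrix.mul_add, Matrix.mul_assoc]
        abel
      _ = A₂₁ * X₁ + A₂₂ * X₂ + B₂ := by rw [← hX₁]
  rw [fromBlocks_mul_fromRows, fromRows_add_fromRows, ← first_row, ← second_row]

theorem block_closure_fixed_point_general
    (A₁₁ : Matrix k k S) (A₁₂ : Matrix k m S) (A₂₁ : Matrix m k S) (A₂₂ : Matrix m m S)
    (P : Matrix k k S) (Q : Matrix m m S)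
    (hP : P = A₁₁ * P + 1) (hQ : Q = (A₂₂ + A₂₁ * P * A₁₂) * Q + 1) :
    fromBlocks (P + P * A₁₂ * Q * A₂₁ * P) (P * A₁₂ * Q) (Q * A₂₁ * P) Q =
      fromBlocks A₁₁ A₁₂ A₂₁ A₂₂ *
        fromBlocks (P + P * A₁₂ * Q * A₂₁ * P) (P * A₁₂ * Q) (Q * A₂₁ * P) Q + 1 := by
  have lower_rows : fromCols (Q * A₂₁ * P) Q =
      Q * (A₂₁ * (P * (fromCols 1 0 : Matrix k (k ⊕ m) S)) + fromCols 0 1) := by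
    simp only [mul_fromCols, fromCols_add_fromCols, Matrix.mul_assoc, Matrix.mul_one,
      Matrix.mul_zero, add_zero, zero_add]
  have upper_rows : fromCols (P + P * A₁₂ * Q * A₂₁ * P) (P * A₁₂ * Q) =
      P * (A₁₂ * fromCols (Q * A₂₁ * P) Q + fromCols 1 0) := by
    simp only [mul_fromCols, fromCols_add_fromCols, Matrix.mul_add, Matrix.mul_assoc,
      Matrix.mul_one, add_zero, add_comm P]
  simpa only [fromRows_fromCols_eq_fromBlocks, fromBlocks_one] using
    fromRows_eq_fromBlocks_mul_fromRows_add hP hQ upper_rows lower_rows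

end BlockElimination

/-- Escalator method for matrix closure: if `P = A₁₁ * P + I` and `Q = D * Q + I`
with `D = A₂₂ + A₂₁ * P * A₁₂`, then the block matrix
`X = [[P + P·A₁₂·Q·A₂₁·P, P·A₁₂·Q], [Q·A₂₁·P, Q]]` satisfies `X = A * X + I`
for `A = [[A₁₁, A₁₂], [A₂₁, A₂₂]]`. -/
theorem block_closure_fixed_point {S : Type*} [Semiring S] (k m : ℕ)
    (A11 : Matrix (Fin k) (Fin k) S) (A12 : Matrix (Fin k) (Fin m) S)
    (A21 : Matrix (Fin m) (Fin k) S) (A22 : Matrix (Fin m) (Fin m) S)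
    (P : Matrix (Fin k) (Fin k) S) (Q : Matrix (Fin m) (Fin m) S)
    (hP : P = A11 * P + 1)
    (hQ : Q = (A22 + A21 * P * A12) * Q + 1) :
    Matrix.fromBlocks (P + P * A12 * Q * A21 * P) (P * A12 * Q) (Q * A21 * P) Q =
      Matrix.fromBlocks A11 A12 A21 A22 *
        Matrix.fromBlocks (P + P * A12 * Q * A21 * P) (P * A12 * Q) (Q * A21 * P) Q + 1 :=
  block_closure_fixed_point_general A11 A12 A21 A22 P Q hP hQ
end

section
/- Let h > 0, m > 0, V : ℝ → ℝ, and let S₁, S₂ : ℝ → ℝ → ℝ be twice differentiable in x and differentiable in t, each satisfying the deformed Hamilton–Jacobi equation ∂S/∂t = V(x) + (1/(2m))·(∂S/∂x)² + (h/(2m))·∂²S/∂x² at every point. Then for any constants λ₁, λ₂ ∈ ℝ, the function S(x, t) := h·log(exp((λ₁ + S₁(x,t))/h) + exp((λ₂ + S₂(x,t))/h)) also satisfies the same equation at every point. That is, the equation is linear with respect to the generalized operations ⊕_h (u ⊕_h v = h·log(e^{u/h} + e^{v/h})) and ⊙ = + (the idempotent superposition principle at finite h). -/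
/-!
The Hopf–Cole substitution `u = exp (S / h)` turns the deformed Hamilton–Jacobi equation into a
linear heat-type equation. It carries `⊕_h` to the ordinary sum of positive functions, so the
superposition principle for the heat-type equation pulls back along `S = h * log u`.
-/

open Filter Topology

section Derivatives

variable {𝕜 F : Type*} [NontriviallyNormedField 𝕜] [NormedAddCommGroup F] [NormedSpace 𝕜 F]

/-- Twice differentiability at a point: `f'` is the derivative of `f` near `x` and `f''` is the
derivative of `f'` at `x`. Unlike `ContDiffAt 𝕜 2 f x`, continuity of the second derivative is not
required. -/
structure HasSecondDerivAt (f f' : 𝕜 → F) (f'' : F) (x : 𝕜) : Prop where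
  eventually_hasDerivAt : ∀ᶠ y in 𝓝 x, HasDerivAt f (f' y) y
  hasDerivAt_deriv : HasDerivAt f' f'' x

namespace HasSecondDerivAt

variable {f f' g g' : 𝕜 → F} {f'' g'' : F} {x : 𝕜}

lemma hasDerivAt (hf : HasSecondDerivAt f f' f'' x) : HasDerivAt f (f' x) x :=
  hf.eventually_hasDerivAt.self_of_nhds

lemma deriv_deriv (hf : HasSecondDerivAt f f' f'' x) : deriv (deriv f) x = f'' := by
  have hderiv : deriv f =ᶠ[𝓝 x] f' := hf.eventually_hasDerivAt.mono fun _ hy => hy.deriv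
  rw [hderiv.deriv_eq, hf.hasDerivAt_deriv.deriv]

lemma const_add (c : F) (hf : HasSecondDerivAt f f' f'' x) :
    HasSecondDerivAt (fun y => c + f y) f' f'' x :=
  ⟨hf.eventually_hasDerivAt.mono fun _ hy => hy.const_add c, hf.hasDerivAt_deriv⟩

lemma add (hf : HasSecondDerivAt f f' f'' x) (hg : HasSecondDerivAt g g' g'' x) :
    HasSecondDerivAt (fun y => f y + g y) (fun y => f' y + g' y) (f'' + g'') x where
  eventually_hasDerivAt := by
    filter_upwards [hf.eventually_hasDerivAt, hg.eventually_hasDerivAt] with y hfy hgy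
    exact hfy.add hgy
  hasDerivAt_deriv := hf.hasDerivAt_deriv.add hg.hasDerivAt_deriv

lemma scomp {φ φ' : 𝕜 → F} {φ'' : F} {s s' : 𝕜 → 𝕜} {s'' : 𝕜}
    (hφ : HasSecondDerivAt φ φ' φ'' (s x)) (hs : HasSecondDerivAt s s' s'' x) :
    HasSecondDerivAt (fun y => φ (s y)) (fun y => s' y • φ' (s y))
      (s' x • s' x • φ'' + s'' • φ' (s x)) x where
  eventually_hasDerivAt := by
    filter_upwards [hs.eventually_hasDerivAt,
      hs.hasDerivAt.continuousAt.eventually hφ.eventually_hasDerivAt] with y hsy hφy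
    exact hφy.scomp y hsy
  hasDerivAt_deriv := hs.hasDerivAt_deriv.smul (hφ.hasDerivAt_deriv.scomp x hs.hasDerivAt)

end HasSecondDerivAt

/-- The derivatives entering a second-order evolution equation: `u` has first and second space
derivatives `uₓ x` and `uₓₓ` and time derivative `uₜ` at `(x, t)`. Only `uₓ` is a function
(of the space variable, at time `t`), since it is differentiated again. -/
structure HasParabolicDerivAt (u : 𝕜 → 𝕜 → F) (uₓ : 𝕜 → F) (uₓₓ uₜ : F) (x t : 𝕜) : Prop where
  space : HasSecondDerivAt (fun y => u y t) uₓ uₓₓ x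
  time : HasDerivAt (u x) uₜ t

namespace HasParabolicDerivAt

variable {u v : 𝕜 → 𝕜 → F} {uₓ vₓ : 𝕜 → F} {uₓₓ uₜ vₓₓ vₜ : F} {x t : 𝕜}

lemma const_add (c : F) (hu : HasParabolicDerivAt u uₓ uₓₓ uₜ x t) :
    HasParabolicDerivAt (fun y s => c + u y s) uₓ uₓₓ uₜ x t :=
  ⟨hu.space.const_add c, hu.time.const_add c⟩

lemma add (hu : HasParabolicDerivAt u uₓ uₓₓ uₜ x t) (hv : HasParabolicDerivAt v vₓ vₓₓ vₜ x t) :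
    HasParabolicDerivAt (fun y s => u y s + v y s) (fun y => uₓ y + vₓ y) (uₓₓ + vₓₓ) (uₜ + vₜ)
      x t :=
  ⟨hu.space.add hv.space, hu.time.add hv.time⟩

lemma scomp {φ φ' : 𝕜 → F} {φ'' : F} {w : 𝕜 → 𝕜 → 𝕜} {wₓ : 𝕜 → 𝕜} {wₓₓ wₜ : 𝕜}
    (hφ : HasSecondDerivAt φ φ' φ'' (w x t)) (hw : HasParabolicDerivAt w wₓ wₓₓ wₜ x t) :
    HasParabolicDerivAt (fun y s => φ (w y s)) (fun y => wₓ y • φ' (w y t))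
      (wₓ x • wₓ x • φ'' + wₓₓ • φ' (w x t)) (wₜ • φ' (w x t)) x t :=
  ⟨hφ.scomp (s := fun y => w y t) hw.space, hφ.hasDerivAt.scomp t hw.time⟩

end HasParabolicDerivAt

end Derivatives

lemma hasSecondDerivAt_exp_div (h z : ℝ) :
    HasSecondDerivAt (fun z => Real.exp (z / h)) (fun z => Real.exp (z / h) / h)
      (Real.exp (z / h) / h ^ 2) z := by
  have hexp (z : ℝ) : HasDerivAt (fun z => Real.exp (z / h)) (Real.exp (z / h) / h) z := by
    simpa only [mul_one_div] using ((hasDerivAt_id' z).div_const h).exp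
  refine ⟨.of_forall hexp, ((hexp z).div_const h).congr_deriv ?_⟩
  rw [div_div, sq]

lemma hasSecondDerivAt_mul_log (h : ℝ) {z : ℝ} (hz : z ≠ 0) :
    HasSecondDerivAt (fun z => h * Real.log z) (fun z => h * z⁻¹) (h * -(z ^ 2)⁻¹) z where
  eventually_hasDerivAt :=
    (eventually_ne_nhds hz).mono fun _ hy => (Real.hasDerivAt_log hy).const_mul h
  hasDerivAt_deriv := (hasDerivAt_inv hz).const_mul h

/-- The generalized addition `u ⊕_h v`, under which (together with adding constants, `⊙ = +`) the
solutions of the deformed Hamilton–Jacobi equation are closed. -/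
noncomputable def deformedAdd (h u v : ℝ) : ℝ :=
  h * Real.log (Real.exp (u / h) + Real.exp (v / h))

/-- `u` solves the heat-type equation `h u_t = h² κ u_xx + v u` at the point `(x, t)`. The paper's
`1 / (2m)` is `κ`, and `v` is the value of the potential at `(x, t)`. -/
def IsHeatSolutionAt (h κ v : ℝ) (u : ℝ → ℝ → ℝ) (x t : ℝ) : Prop :=
  ∃ uₓ uₓₓ uₜ, HasParabolicDerivAt u uₓ uₓₓ uₜ x t ∧ h * uₜ = h ^ 2 * κ * uₓₓ + v * u x t

/-- `S` solves the deformed Hamilton–Jacobi equation `S_t = v + κ S_x² + h κ S_xx` at the point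
`(x, t)`, with `κ` and `v` as in `IsHeatSolutionAt`. -/
def IsDeformedHamiltonJacobiSolutionAt (h κ v : ℝ) (S : ℝ → ℝ → ℝ) (x t : ℝ) : Prop :=
  ∃ Sₓ Sₓₓ Sₜ, HasParabolicDerivAt S Sₓ Sₓₓ Sₜ x t ∧ Sₜ = v + κ * Sₓ x ^ 2 + h * κ * Sₓₓ

section Superposition

variable {h κ v : ℝ} {u u₁ u₂ S S₁ S₂ : ℝ → ℝ → ℝ} {x t : ℝ}

lemma IsHeatSolutionAt.add (hu₁ : IsHeatSolutionAt h κ v u₁ x t)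
    (hu₂ : IsHeatSolutionAt h κ v u₂ x t) :
    IsHeatSolutionAt h κ v (fun y s => u₁ y s + u₂ y s) x t := by
  obtain ⟨_, _, _, hderiv₁, heq₁⟩ := hu₁
  obtain ⟨_, _, _, hderiv₂, heq₂⟩ := hu₂
  exact ⟨_, _, _, hderiv₁.add hderiv₂, by linear_combination heq₁ + heq₂⟩

lemma IsHeatSolutionAt.isDeformedHamiltonJacobiSolutionAt_mul_log (hux : u x t ≠ 0)
    (hu : IsHeatSolutionAt h κ v u x t) :
    IsDeformedHamiltonJacobiSolutionAt h κ v (fun y s => h * Real.log (u y s)) x t := by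
  obtain ⟨_, _, _, hderiv, heq⟩ := hu
  have hlog := hderiv.scomp (hasSecondDerivAt_mul_log h hux)
  refine ⟨_, _, _, hlog, ?_⟩
  simp only [smul_eq_mul]
  field_simp
  linear_combination u x t * heq

namespace IsDeformedHamiltonJacobiSolutionAt

lemma isHeatSolutionAt_exp_div (hh : h ≠ 0)
    (hS : IsDeformedHamiltonJacobiSolutionAt h κ v S x t) :
    IsHeatSolutionAt h κ v (fun y s => Real.exp (S y s / h)) x t := by
  obtain ⟨_, _, _, hderiv, heq⟩ := hS
  have hexp := hderiv.scomp (hasSecondDerivAt_exp_div h (S x t))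
  refine ⟨_, _, _, hexp, ?_⟩
  simp only [smul_eq_mul, heq]
  field_simp
  ring

lemma const_add (lam : ℝ) (hS : IsDeformedHamiltonJacobiSolutionAt h κ v S x t) :
    IsDeformedHamiltonJacobiSolutionAt h κ v (fun y s => lam + S y s) x t := by
  obtain ⟨_, _, _, hderiv, heq⟩ := hS
  exact ⟨_, _, _, hderiv.const_add lam, heq⟩

lemma deformedAdd (hh : h ≠ 0) (hS₁ : IsDeformedHamiltonJacobiSolutionAt h κ v S₁ x t)
    (hS₂ : IsDeformedHamiltonJacobiSolutionAt h κ v S₂ x t) :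
    IsDeformedHamiltonJacobiSolutionAt h κ v (fun y s => deformedAdd h (S₁ y s) (S₂ y s)) x t :=
  ((hS₁.isHeatSolutionAt_exp_div hh).add
    (hS₂.isHeatSolutionAt_exp_div hh)).isDeformedHamiltonJacobiSolutionAt_mul_log (by positivity)

lemma of_differentiableAt (hSₓ : ∀ᶠ y in 𝓝 x, DifferentiableAt ℝ (fun y => S y t) y)
    (hSₓₓ : DifferentiableAt ℝ (deriv fun y => S y t) x) (hSₜ : DifferentiableAt ℝ (S x) t)
    (heq : deriv (S x) t = v + κ * deriv (fun y => S y t) x ^ 2 +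
      h * κ * deriv (deriv fun y => S y t) x) :
    IsDeformedHamiltonJacobiSolutionAt h κ v S x t :=
  ⟨_, _, _, ⟨⟨hSₓ.mono fun _ hy => hy.hasDerivAt, hSₓₓ.hasDerivAt⟩, hSₜ.hasDerivAt⟩, heq⟩

lemma deriv_eq (hS : IsDeformedHamiltonJacobiSolutionAt h κ v S x t) :
    deriv (S x) t = v + κ * deriv (fun y => S y t) x ^ 2 +
      h * κ * deriv (deriv fun y => S y t) x := by
  obtain ⟨_, _, _, hderiv, heq⟩ := hS
  rw [hderiv.time.deriv, hderiv.space.hasDerivAt.deriv, hderiv.space.deriv_deriv, heq]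

end IsDeformedHamiltonJacobiSolutionAt

theorem deformed_hamilton_jacobi_superposition_general (hh : h ≠ 0)
    (hS₁ : IsDeformedHamiltonJacobiSolutionAt h κ v S₁ x t)
    (hS₂ : IsDeformedHamiltonJacobiSolutionAt h κ v S₂ x t) (lam₁ lam₂ : ℝ) :
    IsDeformedHamiltonJacobiSolutionAt h κ v
      (fun y s => deformedAdd h (lam₁ + S₁ y s) (lam₂ + S₂ y s)) x t :=
  (hS₁.const_add lam₁).deformedAdd hh (hS₂.const_add lam₂)

end Superposition

/-- Idempotent superposition principle at finite `h`: if `S₁`, `S₂` solve the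
deformed Hamilton–Jacobi equation `S_t = V + (1/(2m))·S_x² + (h/(2m))·S_xx`,
then so does the generalized linear combination
`λ₁ ⊙ S₁ ⊕_h λ₂ ⊙ S₂ = h·log(exp((λ₁+S₁)/h) + exp((λ₂+S₂)/h))`. -/
theorem deformed_hamilton_jacobi_superposition
    (h m : ℝ) (hh : 0 < h) (hm : 0 < m) (V : ℝ → ℝ)
    (S₁ S₂ : ℝ → ℝ → ℝ)
    (hS₁x : ∀ x t : ℝ, DifferentiableAt ℝ (fun y => S₁ y t) x)
    (hS₁xx : ∀ x t : ℝ, DifferentiableAt ℝ (deriv fun y => S₁ y t) x)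
    (hS₁t : ∀ x t : ℝ, DifferentiableAt ℝ (fun s => S₁ x s) t)
    (hS₂x : ∀ x t : ℝ, DifferentiableAt ℝ (fun y => S₂ y t) x)
    (hS₂xx : ∀ x t : ℝ, DifferentiableAt ℝ (deriv fun y => S₂ y t) x)
    (hS₂t : ∀ x t : ℝ, DifferentiableAt ℝ (fun s => S₂ x s) t)
    (heq₁ : ∀ x t : ℝ,
      deriv (fun s => S₁ x s) t =
        V x + (1 / (2 * m)) * (deriv (fun y => S₁ y t) x) ^ 2 +
          (h / (2 * m)) * deriv (deriv fun y => S₁ y t) x)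
    (heq₂ : ∀ x t : ℝ,
      deriv (fun s => S₂ x s) t =
        V x + (1 / (2 * m)) * (deriv (fun y => S₂ y t) x) ^ 2 +
          (h / (2 * m)) * deriv (deriv fun y => S₂ y t) x)
    (lam₁ lam₂ : ℝ) :
    ∀ x t : ℝ,
      deriv (fun s => h * Real.log
          (Real.exp ((lam₁ + S₁ x s) / h) + Real.exp ((lam₂ + S₂ x s) / h))) t =
        V x + (1 / (2 * m)) * (deriv (fun y => h * Real.log
            (Real.exp ((lam₁ + S₁ y t) / h) + Real.exp ((lam₂ + S₂ y t) / h))) x) ^ 2 +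
          (h / (2 * m)) * deriv (deriv fun y => h * Real.log
            (Real.exp ((lam₁ + S₁ y t) / h) + Real.exp ((lam₂ + S₂ y t) / h))) x := by
  intro x t
  have hS₁ : IsDeformedHamiltonJacobiSolutionAt h (1 / (2 * m)) (V x) S₁ x t :=
    .of_differentiableAt (.of_forall (hS₁x · t)) (hS₁xx x t) (hS₁t x t)
      (by rw [mul_one_div]; exact heq₁ x t)
  have hS₂ : IsDeformedHamiltonJacobiSolutionAt h (1 / (2 * m)) (V x) S₂ x t :=
    .of_differentiableAt (.of_forall (hS₂x · t)) (hS₂xx x t) (hS₂t x t)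
      (by rw [mul_one_div]; exact heq₂ x t)
  rw [← mul_one_div h]
  exact (deformed_hamilton_jacobi_superposition_general hh.ne' hS₁ hS₂ lam₁ lam₂).deriv_eq
end
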